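/- Assume a₁₁, a₂₂, a₁₂ are of class C^{2,1} on [−1,1]², the matrix ((a₁₁,a₁₂),(a₁₂,a₂₂)) is symmetric positive definite at every point of [−1,1]², |a₁₂| < min(a₁₁, a₂₂) pointwise, and a is continuous with a ≥ 0. Let γ be a C² regular simple closed curve contained in the open square (−1,1)² and let K > 0. Then there exist constants C > 0 and h₀ > 0 such that for every even N with h = 2/N < h₀, every constant C̄ > 0, and every grid function e defined on all grid nodes and vanishing at every boundary node, the following holds: if |(L_h e)(x_i,y_j)| ≤ C̄ h at every interior node whose distance to γ is at most K h, and |(L_h e)(x_i,y_j)| ≤ C̄ h² at every other interior node, then max over all grid nodes of |e(x_i,y_j)| ≤ C C̄ h². -/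

import Mathlib

open Set

noncomputable section

/-- The closed square `[-1,1]²` as a subset of `ℝ × ℝ`. -/
def Q2 : Set (ℝ × ℝ) := Set.Icc ((-1 : ℝ), (-1 : ℝ)) (1, 1)

/-- `f` is of class `C^{2,1}` on `s`: twice continuously differentiable with Lipschitz
continuous second derivatives. -/
def C21On (f : ℝ × ℝ → ℝ) (s : Set (ℝ × ℝ)) : Prop :=
  ContDiffOn ℝ 2 f s ∧ ∃ K : NNReal, LipschitzOnWith K (iteratedFDerivWithin ℝ 2 f s) s

/-- Grid node `(x_i, y_j) = (-1 + i h, -1 + j h)` with `h = 2/N`. -/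
def nodePt (N i j : ℕ) : ℝ × ℝ := (-1 + i * (2 / (N : ℝ)), -1 + j * (2 / (N : ℝ)))

/-- The five-point operator `L_h⁰`. -/
def Lh0 (a11 a22 a : ℝ × ℝ → ℝ) (h : ℝ) (v : ℝ × ℝ → ℝ) (z : ℝ × ℝ) : ℝ :=
  (a11 (z.1 - h / 2, z.2) * v (z.1 - h, z.2) + a11 (z.1 + h / 2, z.2) * v (z.1 + h, z.2)
    + a22 (z.1, z.2 - h / 2) * v (z.1, z.2 - h) + a22 (z.1, z.2 + h / 2) * v (z.1, z.2 + h)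
    - (a11 (z.1 - h / 2, z.2) + a11 (z.1 + h / 2, z.2)
        + a22 (z.1, z.2 - h / 2) + a22 (z.1, z.2 + h / 2)) * v z) / h ^ 2
  - a z * v z

/-- The mixed-term operator `L_h⁻` (designed for negative `a₁₂`). -/
def Lhm (a12 : ℝ × ℝ → ℝ) (h : ℝ) (v : ℝ × ℝ → ℝ) (z : ℝ × ℝ) : ℝ :=
  (1 / (2 * h ^ 2)) *
    (-(a12 (z.1 - h / 2, z.2 + h) + a12 (z.1 - h, z.2 + h / 2)) * v (z.1 - h, z.2 + h)
      + (a12 (z.1 - h / 2, z.2 + h) + a12 (z.1, z.2 + h / 2)) * v (z.1, z.2 + h)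
      + (a12 (z.1 - h, z.2 + h / 2) + a12 (z.1 - h / 2, z.2)) * v (z.1 - h, z.2)
      - (a12 (z.1, z.2 + h / 2) + a12 (z.1 - h / 2, z.2)
          + a12 (z.1, z.2 - h / 2) + a12 (z.1 + h / 2, z.2)) * v z
      + (a12 (z.1 + h, z.2 - h / 2) + a12 (z.1 + h / 2, z.2)) * v (z.1 + h, z.2)
      + (a12 (z.1, z.2 - h / 2) + a12 (z.1 + h / 2, z.2 - h)) * v (z.1, z.2 - h)
      - (a12 (z.1 + h, z.2 - h / 2) + a12 (z.1 + h / 2, z.2 - h)) * v (z.1 + h, z.2 - h))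

/-- The mixed-term operator `L_h⁺` (designed for nonnegative `a₁₂`). -/
def Lhp (a12 : ℝ × ℝ → ℝ) (h : ℝ) (v : ℝ × ℝ → ℝ) (z : ℝ × ℝ) : ℝ :=
  (1 / (2 * h ^ 2)) *
    (-(a12 (z.1 + h / 2, z.2 + h) + a12 (z.1, z.2 + h / 2)) * v (z.1, z.2 + h)
      + (a12 (z.1 + h / 2, z.2 + h) + a12 (z.1 + h, z.2 + h / 2)) * v (z.1 + h, z.2 + h)
      - (a12 (z.1 - h, z.2 - h / 2) + a12 (z.1 - h / 2, z.2)) * v (z.1 - h, z.2)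
      + (a12 (z.1, z.2 + h / 2) + a12 (z.1 - h / 2, z.2)
          + a12 (z.1, z.2 - h / 2) + a12 (z.1 + h / 2, z.2)) * v z
      - (a12 (z.1 + h, z.2 + h / 2) + a12 (z.1 + h / 2, z.2)) * v (z.1 + h, z.2)
      + (a12 (z.1 - h, z.2 - h / 2) + a12 (z.1 - h / 2, z.2 - h)) * v (z.1 - h, z.2 - h)
      - (a12 (z.1, z.2 - h / 2) + a12 (z.1 - h / 2, z.2 - h)) * v (z.1, z.2 - h))

/-- The sign-adapted seven-point operator `L_h`. -/
def Lh (a11 a22 a12 a : ℝ × ℝ → ℝ) (h : ℝ) (v : ℝ × ℝ → ℝ) (z : ℝ × ℝ) : ℝ :=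
  if a12 z < 0 then Lh0 a11 a22 a h v z + Lhm a12 h v z
  else Lh0 a11 a22 a h v z + Lhp a12 h v z

/-- The Euclidean distance from a point `z ∈ ℝ²` to the image `γ = r([0,1])` of a curve. -/
def distToCurve (r : ℝ → ℝ × ℝ) (z : ℝ × ℝ) : ℝ :=
  sInf ((fun t => Real.sqrt ((z.1 - (r t).1) ^ 2 + (z.2 - (r t).2) ^ 2)) '' Icc 0 1)

/-- Discrete seven-point difference form. -/
def SD (cE cW cN cS p q m n v0 vE vW vN vS v1 v2 v3 v4 : ℝ) : ℝ :=
  cE * (vE - v0) + cW * (vW - v0) + cN * (vN - v0) + cS * (vS - v0)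
    + p * (v1 - v0) + q * (v2 - v0) + m * (v3 - v0) + n * (v4 - v0)

/-- Difference form of a function on the integer lattice. -/
def SZ (cE cW cN cS p q m n : ℝ) (V : ℤ → ℤ → ℝ) (i j : ℤ) : ℝ :=
  SD cE cW cN cS p q m n (V i j) (V (i+1) j) (V (i-1) j) (V i (j+1)) (V i (j-1))
    (V (i+1) (j+1)) (V (i-1) (j-1)) (V (i-1) (j+1)) (V (i+1) (j-1))

set_option maxHeartbeats 1000000 in
lemma comparison_aux (N : ℤ) (c0 D0 b α m0 t : ℝ) (E Φ : ℤ → ℤ → ℝ)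
    (hc0 : 0 < c0) (hα : 0 < α) (hα1 : α ≤ 1 / 16) (hαD : α * D0 ≤ c0 / 2)
    (hb : b ≤ α * c0) (hbc : 4 * b < c0) (_hm0 : 0 < m0) (ht : 1 < t)
    (hΦ : ∀ i j, m0 ≤ Φ i j ∧ Φ i j ≤ 2 * m0)
    (hE : ∀ i j, ¬ (0 < i ∧ i < N ∧ 0 < j ∧ j < N) → E i j = 0)
    (hEt : ∀ i j, |E i j| ≤ t * Φ i j)
    (hmain : ∀ i j, 0 < i → i < N → 0 < j → j < N → ∃ cE cW cN cS p q m n s : ℝ,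
      c0 ≤ cE ∧ c0 ≤ cW ∧ c0 ≤ cN ∧ c0 ≤ cS ∧ -b ≤ p ∧ -b ≤ q ∧ -b ≤ m ∧ -b ≤ n ∧ 0 ≤ s ∧
      cE + cW + cN + cS + p + q + m + n + s ≤ D0 ∧
      |SZ cE cW cN cS p q m n E i j - s * E i j|
        < -(SZ cE cW cN cS p q m n Φ i j - s * Φ i j))
    (i0 j0 : ℤ) (h0 : 0 < i0 ∧ i0 < N ∧ 0 < j0 ∧ j0 < N) : E i0 j0 ≠ t * Φ i0 j0 := by
  intro heq
  set W : ℤ → ℤ → ℝ := fun i j => t * Φ i j - E i j with hW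
  have hWn : ∀ i j, 0 ≤ W i j := fun i j => by
    have := (abs_le.1 (hEt i j)).2
    simp only [hW]; linarith
  have hWu : ∀ i j, W i j ≤ 4 * (t * m0) := fun i j => by
    have := (abs_le.1 (hEt i j)).1
    have h2 := mul_le_mul_of_nonneg_left (hΦ i j).2 (by linarith : (0:ℝ) ≤ t)
    simp only [hW]; linarith
  set f : ℤ → ℤ → ℝ := fun i j =>
    W i j - α * (W (i+1) j + W (i-1) j + W i (j+1) + W i (j-1)) with hf
  have hfb : ∀ i j, ¬ (0 < i ∧ i < N ∧ 0 < j ∧ j < N) → 0 ≤ f i j := fun i j h => by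
    have h1 : t * m0 ≤ W i j := by
      simp only [hW, hE i j h]
      have := mul_le_mul_of_nonneg_left (hΦ i j).1 (by linarith : (0:ℝ) ≤ t)
      linarith
    have h2 : α * (W (i+1) j + W (i-1) j + W i (j+1) + W i (j-1)) ≤ 1 / 16 * (16 * (t * m0)) := by
      apply mul_le_mul hα1 _ _ (by norm_num)
      · linarith [hWu (i+1) j, hWu (i-1) j, hWu i (j+1), hWu i (j-1)]
      · linarith [hWn (i+1) j, hWn (i-1) j, hWn i (j+1), hWn i (j-1)]
    simp only [hf]; linarith
  -- minimise f over the interior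
  obtain ⟨⟨i, j⟩, hij, hmin⟩ := Finset.exists_min_image (Finset.Ioo 0 N ×ˢ Finset.Ioo 0 N)
    (fun x : ℤ × ℤ => f x.1 x.2) ⟨(i0, j0), by simp; tauto⟩
  have hf0 : f i0 j0 ≤ 0 := by
    have : W i0 j0 = 0 := by simp only [hW, heq]; ring
    simp only [hf, this]
    have := mul_nonneg hα.le (add_nonneg (add_nonneg (add_nonneg (hWn (i0+1) j0) (hWn (i0-1) j0))
      (hWn i0 (j0+1))) (hWn i0 (j0-1)))
    linarith
  have hfm : f i j ≤ 0 := (hmin (i0, j0) (by simp; tauto)).trans hf0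
  have hall : ∀ k l, f i j ≤ f k l := fun k l => by
    by_cases h : 0 < k ∧ k < N ∧ 0 < l ∧ l < N
    · exact hmin (k, l) (by simp; tauto)
    · exact hfm.trans (hfb k l h)
  simp only [Finset.mem_product, Finset.mem_Ioo] at hij
  obtain ⟨cE, cW, cN, cS, p, q, m, n, s, h1, h2, h3, h4, h5, h6, h7, h8, h9, hD, hlt⟩ :=
    hmain i j hij.1.1 hij.1.2 hij.2.1 hij.2.2
  have hpos : SZ cE cW cN cS p q m n W i j - s * W i j < 0 := by
    have e1 : SZ cE cW cN cS p q m n W i j - s * W i j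
        = t * (SZ cE cW cN cS p q m n Φ i j - s * Φ i j)
          - (SZ cE cW cN cS p q m n E i j - s * E i j) := by
      simp only [SZ, SD, hW]; ring
    have e2 := (abs_lt.1 hlt).1
    have e3 := (abs_nonneg _).trans_lt hlt
    rw [e1]; nlinarith
  -- key inequality
  set D := cE + cW + cN + cS + p + q + m + n + s with hDdef
  have hD4 : 2 * c0 < D := by rw [hDdef]; linarith
  have key : -(SZ cE cW cN cS p q m n W i j - s * W i j) ≤
      D * f i j - c0 / 2 * (f (i+1) j + f (i-1) j + f i (j+1) + f i (j-1)) := by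
    have hαDD : α * D ≤ c0 / 2 := (mul_le_mul_of_nonneg_left hD hα.le).trans hαD
    have ax : ∀ c, c0 ≤ c → ∀ k l, 0 ≤ (c - α * D - c0 / 2) * W k l := fun c hc k l =>
      mul_nonneg (by linarith) (hWn k l)
    have co : ∀ c, -b ≤ c → ∀ k l, 0 ≤ (c + α * c0) * W k l := fun c hc k l =>
      mul_nonneg (by linarith) (hWn k l)
    have oo : ∀ k l, 0 ≤ α * c0 * W k l := fun k l => mul_nonneg (by positivity) (hWn k l)
    have a1 := ax cE h1 (i+1) j
    have a2 := ax cW h2 (i-1) j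
    have a3 := ax cN h3 i (j+1)
    have a4 := ax cS h4 i (j-1)
    have b1 := co p h5 (i+1) (j+1)
    have b2 := co q h6 (i-1) (j-1)
    have b3 := co m h7 (i-1) (j+1)
    have b4 := co n h8 (i+1) (j-1)
    have o0 := oo i j
    have o1 := oo (i+2) j
    have o2 := oo (i-2) j
    have o3 := oo i (j+2)
    have o4 := oo i (j-2)
    simp only [SZ, SD, hf]
    have r1 : i + 1 + 1 = i + 2 := by ring
    have r2 : i - 1 - 1 = i - 2 := by ring
    have r3 : j + 1 + 1 = j + 2 := by ring
    have r4 : j - 1 - 1 = j - 2 := by ring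
    have r5 : i + 1 - 1 = i := by ring
    have r6 : i - 1 + 1 = i := by ring
    have r7 : j + 1 - 1 = j := by ring
    have r8 : j - 1 + 1 = j := by ring
    rw [r1, r2, r3, r4, r5, r6, r7, r8]
    have hDs : s = D - (cE + cW + cN + cS + p + q + m + n) := by rw [hDdef]; ring
    rw [hDs]
    clear_value W D
    linarith
  have hsum : 4 * f i j ≤ f (i+1) j + f (i-1) j + f i (j+1) + f i (j-1) := by
    linarith [hall (i+1) j, hall (i-1) j, hall i (j+1), hall i (j-1)]
  clear_value f D
  nlinarith

lemma comparison (N : ℤ) (c0 D0 b α m0 : ℝ) (E Φ : ℤ → ℤ → ℝ)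
    (hc0 : 0 < c0) (hα : 0 < α) (hα1 : α ≤ 1 / 16) (hαD : α * D0 ≤ c0 / 2)
    (hb : b ≤ α * c0) (hbc : 4 * b < c0) (hm0 : 0 < m0)
    (hΦ : ∀ i j, m0 ≤ Φ i j ∧ Φ i j ≤ 2 * m0)
    (hE : ∀ i j, ¬ (0 < i ∧ i < N ∧ 0 < j ∧ j < N) → E i j = 0)
    (hmain : ∀ i j, 0 < i → i < N → 0 < j → j < N → ∃ cE cW cN cS p q m n s : ℝ,
      c0 ≤ cE ∧ c0 ≤ cW ∧ c0 ≤ cN ∧ c0 ≤ cS ∧ -b ≤ p ∧ -b ≤ q ∧ -b ≤ m ∧ -b ≤ n ∧ 0 ≤ s ∧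
      cE + cW + cN + cS + p + q + m + n + s ≤ D0 ∧
      |SZ cE cW cN cS p q m n E i j - s * E i j|
        < -(SZ cE cW cN cS p q m n Φ i j - s * Φ i j)) (i j : ℤ) : |E i j| ≤ Φ i j := by
  have hΦp : ∀ i j, 0 < Φ i j := fun i j => hm0.trans_le (hΦ i j).1
  by_cases hij : 0 < i ∧ i < N ∧ 0 < j ∧ j < N
  swap
  · rw [hE i j hij, abs_zero]; exact (hΦp i j).le
  obtain ⟨⟨i0, j0⟩, h0, hmax⟩ := Finset.exists_max_image (Finset.Ioo 0 N ×ˢ Finset.Ioo 0 N)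
    (fun x : ℤ × ℤ => |E x.1 x.2| / Φ x.1 x.2) ⟨(i, j), by simp; tauto⟩
  simp only [Finset.mem_product, Finset.mem_Ioo, Prod.forall] at h0 hmax
  set t := |E i0 j0| / Φ i0 j0 with ht
  have hle : ∀ i j, |E i j| ≤ t * Φ i j := fun i j => by
    by_cases h : 0 < i ∧ i < N ∧ 0 < j ∧ j < N
    · have := hmax i j (by tauto)
      rwa [div_le_iff₀ (hΦp i j)] at this
    · rw [hE i j h, abs_zero]
      exact mul_nonneg (div_nonneg (abs_nonneg _) (hΦp _ _).le) (hΦp i j).le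
  by_cases ht1 : t ≤ 1
  · exact (hle i j).trans (by nlinarith [hΦp i j])
  push Not at ht1
  exfalso
  have hteq : |E i0 j0| = t * Φ i0 j0 := by rw [ht, div_mul_cancel₀ _ (hΦp i0 j0).ne']
  rcases abs_choice (E i0 j0) with h | h
  · exact comparison_aux N c0 D0 b α m0 t E Φ hc0 hα hα1 hαD hb hbc hm0 ht1 hΦ hE hle hmain i0 j0
      (by tauto) (by rw [← h]; exact hteq)
  · refine comparison_aux N c0 D0 b α m0 t (fun i j => - E i j) Φ hc0 hα hα1 hαD hb hbc hm0 ht1 hΦ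
      (fun i j h => by simp [hE i j h]) (fun i j => by simpa using hle i j) ?_ i0 j0
      (by tauto) (by rw [← h]; exact hteq)
    intro i j k1 k2 k3 k4
    obtain ⟨cE, cW, cN, cS, p, q, m, n, s, h1, h2, h3, h4, h5, h6, h7, h8, h9, hD, hlt⟩ :=
      hmain i j k1 k2 k3 k4
    refine ⟨cE, cW, cN, cS, p, q, m, n, s, h1, h2, h3, h4, h5, h6, h7, h8, h9, hD, ?_⟩
    have : SZ cE cW cN cS p q m n (fun i j => - E i j) i j - s * (- E i j)
      = -(SZ cE cW cN cS p q m n E i j - s * E i j) := by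
      simp only [SZ, SD]; ring
    rw [this, abs_neg]; exact hlt

/-- Difference form of a function on the plane. -/
def SP (cE cW cN cS p q m n : ℝ) (h : ℝ) (v : ℝ × ℝ → ℝ) (z : ℝ × ℝ) : ℝ :=
  SD cE cW cN cS p q m n (v z) (v (z.1 + h, z.2)) (v (z.1 - h, z.2)) (v (z.1, z.2 + h))
    (v (z.1, z.2 - h)) (v (z.1 + h, z.2 + h)) (v (z.1 - h, z.2 - h)) (v (z.1 - h, z.2 + h))
    (v (z.1 + h, z.2 - h))

/-- Admissible stencil weights. -/
structure GoodW (c0 B C h cE cW cN cS p q m n : ℝ) : Prop where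
  hE : c0 ≤ cE
  hW : c0 ≤ cW
  hN : c0 ≤ cN
  hS : c0 ≤ cS
  hp : -(C * h) ≤ p
  hq : -(C * h) ≤ q
  hm : -(C * h) ≤ m
  hn : -(C * h) ≤ n
  bE : |cE| ≤ B
  bW : |cW| ≤ B
  bN : |cN| ≤ B
  bS : |cS| ≤ B
  bp : |p| ≤ B
  bq : |q| ≤ B
  bm : |m| ≤ B
  bn : |n| ≤ B
  dEW : |cE - cW| ≤ C * h
  dNS : |cN - cS| ≤ C * h
  dpq : |p - q| ≤ C * h
  dmn : |m - n| ≤ C * h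

lemma C21On.lip {f : ℝ × ℝ → ℝ} (hf : C21On f Q2) : ∃ L : ℝ, 0 ≤ L ∧ ∀ z ∈ Q2, ∀ w ∈ Q2, ∀ h : ℝ,
    |w.1 - z.1| ≤ h → |w.2 - z.2| ≤ h → |f w - f z| ≤ L * h := by
  obtain ⟨K, hK⟩ := LocallyLipschitzOn.exists_lipschitzOnWith_of_compact isCompact_Icc
    ((hf.1.of_le (by norm_num : (1 : WithTop ℕ∞) ≤ 2)).locallyLipschitzOn (convex_Icc _ _))
  refine ⟨K, K.2, fun z hz w hw h h1 h2 => ?_⟩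
  have := hK.dist_le_mul w hw z hz
  rw [Real.dist_eq, Prod.dist_eq, Real.dist_eq, Real.dist_eq] at this
  exact this.trans (mul_le_mul_of_nonneg_left (max_le h1 h2) K.2)

lemma bdd_of_cont {f : ℝ × ℝ → ℝ} (hf : ContinuousOn f Q2) : ∃ B : ℝ, 0 ≤ B ∧ ∀ z ∈ Q2, |f z| ≤ B := by
  obtain ⟨B, hB⟩ := isCompact_Icc.exists_bound_of_continuousOn hf
  exact ⟨|B|, abs_nonneg _, fun z hz => (hB z hz).trans (le_abs_self _)⟩

lemma mem_Q2 {x y : ℝ} : (x, y) ∈ Q2 ↔ (-1 ≤ x ∧ x ≤ 1) ∧ (-1 ≤ y ∧ y ≤ 1) := by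
  simp only [Q2, mem_Icc, Prod.mk_le_mk]; tauto

lemma elliptic (a11 a22 a12 : ℝ × ℝ → ℝ)
    (ha11 : ContinuousOn a11 Q2) (ha22 : ContinuousOn a22 Q2) (ha12 : ContinuousOn a12 Q2)
    (hdom : ∀ z ∈ Q2, |a12 z| < min (a11 z) (a22 z)) :
    ∃ c : ℝ, 0 < c ∧ ∀ z ∈ Q2, c ≤ a11 z - |a12 z| ∧ c ≤ a22 z - |a12 z| := by
  have hcont : ContinuousOn (fun z => min (a11 z) (a22 z) - |a12 z|) Q2 :=
    (ContinuousOn.inf ha11 ha22).sub (continuous_abs.comp_continuousOn ha12)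
  obtain ⟨z0, hz0, hmin⟩ := (isCompact_Icc : IsCompact Q2).exists_isMinOn
    ⟨(0, 0), mem_Q2.2 (by norm_num)⟩ hcont
  refine ⟨min (a11 z0) (a22 z0) - |a12 z0|, by linarith [hdom z0 hz0], fun z hz => ?_⟩
  have : min (a11 z0) (a22 z0) - |a12 z0| ≤ min (a11 z) (a22 z) - |a12 z| := hmin hz
  constructor
  · linarith [min_le_left (a11 z) (a22 z)]
  · linarith [min_le_right (a11 z) (a22 z)]

set_option maxHeartbeats 1000000 in
lemma weights (a11 a22 a12 a : ℝ × ℝ → ℝ)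
    (ha11 : C21On a11 Q2) (ha22 : C21On a22 Q2) (ha12 : C21On a12 Q2)
    (hdom : ∀ z ∈ Q2, |a12 z| < min (a11 z) (a22 z)) :
    ∃ c0 B C h0 : ℝ, 0 < c0 ∧ 0 ≤ B ∧ 0 ≤ C ∧ 0 < h0 ∧ ∀ h, 0 < h → h < h0 → ∀ x y : ℝ,
      -1 ≤ x - h → x + h ≤ 1 → -1 ≤ y - h → y + h ≤ 1 →
      ∃ cE cW cN cS p q m n : ℝ, GoodW c0 B C h cE cW cN cS p q m n ∧
      ∀ v : ℝ × ℝ → ℝ, h ^ 2 * Lh a11 a22 a12 a h v (x, y) =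
        SP cE cW cN cS p q m n h v (x, y) - (h ^ 2 * a (x, y)) * v (x, y) := by
  obtain ⟨L1, hL1, l1⟩ := ha11.lip
  obtain ⟨L2, hL2, l2⟩ := ha22.lip
  obtain ⟨L3, hL3, l3⟩ := ha12.lip
  obtain ⟨B1, hB1, b1⟩ := bdd_of_cont ha11.1.continuousOn
  obtain ⟨B2, hB2, b2⟩ := bdd_of_cont ha22.1.continuousOn
  obtain ⟨B3, hB3, b3⟩ := bdd_of_cont ha12.1.continuousOn
  obtain ⟨c, hc, hcz⟩ := elliptic a11 a22 a12 ha11.1.continuousOn ha22.1.continuousOn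
    ha12.1.continuousOn hdom
  refine ⟨c / 2, B1 + B2 + B3, 4 * (L1 + L2 + L3), c / (4 * (L1 + L2 + L3 + 1)), by positivity,
    by positivity, by positivity, by positivity, ?_⟩
  intro h hh hlt x y hx1 hx2 hy1 hy2
  rw [lt_div_iff₀ (by positivity)] at hlt
  have k1 : 0 ≤ L1 * h := by positivity
  have k2 : 0 ≤ L2 * h := by positivity
  have k3 : 0 ≤ L3 * h := by positivity
  have hQ : (x, y) ∈ Q2 := mem_Q2.2 ⟨⟨by linarith, by linarith⟩, by linarith, by linarith⟩
  have hcz := hcz _ hQ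
  have lip : ∀ s t : ℝ, -h ≤ s → s ≤ h → -h ≤ t → t ≤ h →
      (|a11 (x + s, y + t) - a11 (x, y)| ≤ L1 * h ∧ |a22 (x + s, y + t) - a22 (x, y)| ≤ L2 * h ∧
      |a12 (x + s, y + t) - a12 (x, y)| ≤ L3 * h) ∧ |a11 (x + s, y + t)| ≤ B1 ∧
      |a22 (x + s, y + t)| ≤ B2 ∧ |a12 (x + s, y + t)| ≤ B3 := by
    intro s t h1 h2 h3 h4
    have hm : (x + s, y + t) ∈ Q2 := mem_Q2.2 ⟨⟨by linarith, by linarith⟩, by linarith, by linarith⟩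
    have e1 : |x + s - x| ≤ h := by rw [add_sub_cancel_left]; exact abs_le.2 ⟨h1, h2⟩
    have e2 : |y + t - y| ≤ h := by rw [add_sub_cancel_left]; exact abs_le.2 ⟨h3, h4⟩
    exact ⟨⟨l1 _ hQ _ hm h e1 e2, l2 _ hQ _ hm h e1 e2, l3 _ hQ _ hm h e1 e2⟩, b1 _ hm, b2 _ hm,
      b3 _ hm⟩
  have lE := lip (h/2) 0 (by linarith) (by linarith) (by linarith) (by linarith)
  have lW := lip (-(h/2)) 0 (by linarith) (by linarith) (by linarith) (by linarith)
  have lN := lip 0 (h/2) (by linarith) (by linarith) (by linarith) (by linarith)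
  have lS := lip 0 (-(h/2)) (by linarith) (by linarith) (by linarith) (by linarith)
  rw [← sub_eq_add_neg] at lW lS
  simp only [add_zero] at lE lW lN lS
  simp only [abs_le] at lE lW lN lS
  have h2 : h ^ 2 ≠ 0 := by positivity
  by_cases hs : a12 (x, y) < 0
  · have m1 := (lip h (-(h/2)) (by linarith) (by linarith) (by linarith) (by linarith))
    have m2 := (lip (-h) (h/2) (by linarith) (by linarith) (by linarith) (by linarith))
    have m3 := (lip (-(h/2)) h (by linarith) (by linarith) (by linarith) (by linarith))
    have m4 := (lip (h/2) (-h) (by linarith) (by linarith) (by linarith) (by linarith))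
    simp only [← sub_eq_add_neg, abs_le] at m1 m2 m3 m4
    rw [abs_of_neg hs] at hcz
    refine ⟨a11 (x + h/2, y) + (a12 (x + h, y - h/2) + a12 (x + h/2, y)) / 2,
      a11 (x - h/2, y) + (a12 (x - h, y + h/2) + a12 (x - h/2, y)) / 2,
      a22 (x, y + h/2) + (a12 (x - h/2, y + h) + a12 (x, y + h/2)) / 2,
      a22 (x, y - h/2) + (a12 (x, y - h/2) + a12 (x + h/2, y - h)) / 2,
      0, 0, -((a12 (x - h/2, y + h) + a12 (x - h, y + h/2)) / 2),
      -((a12 (x + h, y - h/2) + a12 (x + h/2, y - h)) / 2), ?_, ?_⟩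
    · constructor
      all_goals first
        | linarith
        | (rw [abs_le]; constructor <;> linarith)
    · intro v
      simp only [Lh, hs, if_true, Lh0, Lhm, SP, SD]
      field_simp
      ring
  · have m1 := (lip h (h/2) (by linarith) (by linarith) (by linarith) (by linarith))
    have m2 := (lip (-h) (-(h/2)) (by linarith) (by linarith) (by linarith) (by linarith))
    have m3 := (lip (h/2) h (by linarith) (by linarith) (by linarith) (by linarith))
    have m4 := (lip (-(h/2)) (-h) (by linarith) (by linarith) (by linarith) (by linarith))
    simp only [← sub_eq_add_neg, abs_le] at m1 m2 m3 m4
    rw [abs_of_nonneg (not_lt.1 hs)] at hcz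
    refine ⟨a11 (x + h/2, y) - (a12 (x + h, y + h/2) + a12 (x + h/2, y)) / 2,
      a11 (x - h/2, y) - (a12 (x - h, y - h/2) + a12 (x - h/2, y)) / 2,
      a22 (x, y + h/2) - (a12 (x + h/2, y + h) + a12 (x, y + h/2)) / 2,
      a22 (x, y - h/2) - (a12 (x, y - h/2) + a12 (x - h/2, y - h)) / 2,
      (a12 (x + h/2, y + h) + a12 (x + h, y + h/2)) / 2,
      (a12 (x - h, y - h/2) + a12 (x - h/2, y - h)) / 2, 0, 0, ?_, ?_⟩
    · constructor
      all_goals first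
        | linarith
        | (rw [abs_le]; constructor <;> linarith)
    · intro v
      simp only [Lh, hs, if_false, Lh0, Lhp, SP, SD]
      field_simp
      ring

/-- Huber function. -/
def huber (m s : ℝ) : ℝ := if |s| ≤ m then s ^ 2 / (2 * m) else |s| - m / 2

lemma huber_nonneg {m : ℝ} (hm : 0 < m) (s : ℝ) : 0 ≤ huber m s := by
  unfold huber; split_ifs with h
  · positivity
  · linarith

lemma huber_le {m : ℝ} (hm : 0 < m) (s : ℝ) : huber m s ≤ |s| := by
  unfold huber; split_ifs with h
  · rw [div_le_iff₀ (by positivity), ← sq_abs]; nlinarith [abs_nonneg s]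
  · linarith

lemma huber_dual {m : ℝ} (hm : 0 < m) (s p : ℝ) (hp : |p| ≤ 1) : p * s - m * p ^ 2 / 2 ≤ huber m s := by
  unfold huber
  have h1 : p * s ≤ |p| * |s| := by rw [← abs_mul]; exact le_abs_self _
  have h0 := abs_nonneg p
  rw [← sq_abs p]
  split_ifs with h
  · rw [le_div_iff₀ (by positivity), ← sq_abs s]
    nlinarith [sq_nonneg (|s| - m * |p|)]
  · push Not at h
    nlinarith [mul_nonneg (sub_nonneg.2 hp) (sub_nonneg.2 h.le), mul_nonneg hm.le (sq_nonneg (1 - |p|))]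

lemma huber_sub {m : ℝ} (hm : 0 < m) (s : ℝ) : ∃ p : ℝ, |p| ≤ 1 ∧
    ∀ s', huber m s + p * (s' - s) ≤ huber m s' := by
  by_cases h : |s| ≤ m
  · have hp : |s / m| ≤ 1 := by rw [abs_div, abs_of_pos hm, div_le_one hm]; exact h
    refine ⟨s / m, hp, fun s' => ?_⟩
    have := huber_dual hm s' (s / m) hp
    have e : huber m s = s ^ 2 / (2 * m) := by unfold huber; rw [if_pos h]
    rw [e]
    have e2 : s ^ 2 / (2 * m) + s / m * (s' - s) = s / m * s' - m * (s / m) ^ 2 / 2 := by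
      field_simp; ring
    rw [e2]; exact this
  · have e : huber m s = |s| - m / 2 := by unfold huber; rw [if_neg h]
    rcases le_total 0 s with hs | hs
    · refine ⟨1, by simp, fun s' => ?_⟩
      have := huber_dual hm s' 1 (by simp)
      rw [e, abs_of_nonneg hs]; linarith
    · refine ⟨-1, by simp, fun s' => ?_⟩
      have := huber_dual hm s' (-1) (by simp)
      rw [e, abs_of_nonpos hs]; linarith

lemma huber_lip {m : ℝ} (hm : 0 < m) (s s' : ℝ) : |huber m s' - huber m s| ≤ |s' - s| := by
  have key : ∀ s s', huber m s - huber m s' ≤ |s' - s| := fun s s' => by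
    obtain ⟨p, hp, h⟩ := huber_sub hm s
    have h1 := h s'
    have h2 : -(p * (s' - s)) ≤ |p| * |s' - s| := by rw [← abs_mul]; exact neg_le_abs _
    nlinarith [abs_nonneg (s' - s)]
  rw [abs_le]
  constructor
  · linarith [key s s']
  · have := key s' s; rw [abs_sub_comm] at this; exact this

/-- Core pair estimate. -/
lemma pair_core {m : ℝ} (hm : 0 < m) {B C P Q h c c' d0 dp dm : ℝ} (hC : 0 ≤ C)
    (hB : |c| ≤ B) (hcc : |c - c'| ≤ C * h) (hh : 0 < h) 
    (hdp : |dp - d0| ≤ P * h) (hdm : |dm - d0| ≤ P * h) (hd2 : |dp + dm - 2 * d0| ≤ Q * h ^ 2) :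
    ∃ R R' : ℝ, 0 ≤ R ∧ 0 ≤ R' ∧ R ≤ 2 * P * h ∧ R' ≤ 2 * P * h ∧
      R + R' ≥ (huber m dp + huber m dm - 2 * huber m d0) - |dp + dm - 2 * d0| ∧
      c * R + c' * R' - (B * Q + C * P) * h ^ 2 ≤
        c * (huber m dp - huber m d0) + c' * (huber m dm - huber m d0) := by
  obtain ⟨p, hp, hs⟩ := huber_sub hm d0
  have hP : 0 ≤ P * h := (abs_nonneg _).trans hdp
  have up : ∀ d, |d - d0| ≤ P * h → huber m d - huber m d0 - p * (d - d0) ≤ 2 * P * h := fun d hd => by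
    have h1 := (abs_le.1 (huber_lip hm d0 d)).2
    have h2 : -(p * (d - d0)) ≤ |p| * |d - d0| := by rw [← abs_mul]; exact neg_le_abs _
    nlinarith [abs_nonneg (d - d0)]
  refine ⟨huber m dp - huber m d0 - p * (dp - d0), huber m dm - huber m d0 - p * (dm - d0),
    by linarith [hs dp], by linarith [hs dm], up _ hdp, up _ hdm, ?_, ?_⟩
  · have h2 : p * (dp + dm - 2 * d0) ≤ |p| * |dp + dm - 2 * d0| := by
      rw [← abs_mul]; exact le_abs_self _
    nlinarith [abs_nonneg (dp + dm - 2 * d0)]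
  · have e1 : |c * (dp + dm - 2 * d0)| ≤ B * (Q * h ^ 2) := by
      rw [abs_mul]; exact mul_le_mul hB hd2 (abs_nonneg _) ((abs_nonneg _).trans hB)
    have e2 : |(c - c') * (dm - d0)| ≤ C * h * (P * h) := by
      rw [abs_mul]; exact mul_le_mul hcc hdm (abs_nonneg _) (by positivity)
    have e3 : |p * (c * (dp + dm - 2 * d0) - (c - c') * (dm - d0))| ≤ (B * Q + C * P) * h ^ 2 := by
      rw [abs_mul]
      have := abs_sub (c * (dp + dm - 2 * d0)) ((c - c') * (dm - d0))
      have h0 := abs_nonneg (c * (dp + dm - 2 * d0) - (c - c') * (dm - d0))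
      nlinarith
    have := (abs_le.1 e3).1
    linarith

lemma pairA {m : ℝ} (hm : 0 < m) {B C P Q h c c' d0 dp dm : ℝ} (hC : 0 ≤ C)
    (hB : |c| ≤ B) (hcc : |c - c'| ≤ C * h) (hh : 0 < h) (hc : -(C * h) ≤ c) (hc' : -(C * h) ≤ c')
    (hdp : |dp - d0| ≤ P * h) (hdm : |dm - d0| ≤ P * h) (hd2 : |dp + dm - 2 * d0| ≤ Q * h ^ 2) :
    -((B * Q + 5 * C * P) * h ^ 2) ≤
        c * (huber m dp - huber m d0) + c' * (huber m dm - huber m d0) := by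
  obtain ⟨R, R', h1, h2, h3, h4, -, h6⟩ := pair_core hm hC hB hcc hh hdp hdm hd2
  have k : ∀ c R, -(C * h) ≤ c → 0 ≤ R → R ≤ 2 * P * h → -(2 * C * P * h ^ 2) ≤ c * R := by
    intro c R hc hR hR2
    have := mul_le_mul_of_nonneg_left hR2 (by positivity : 0 ≤ C * h)
    nlinarith
  linarith [k c R hc h1 h3, k c' R' hc' h2 h4]

lemma pairB {K' : ℝ} (hK' : 0 < K') {B C P Q c0 h c c' d0 dp dm : ℝ} (hC : 0 ≤ C) (hc0 : 0 < c0)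
    (hB : |c| ≤ B) (hcc : |c - c'| ≤ C * h) (hh : 0 < h) (hc : c0 ≤ c) (hc' : c0 ≤ c')
    (hdp : dp = d0 + h) (hdm : dm = d0 - h) (hP : 1 ≤ P) (hQ : 0 ≤ Q) (hd0 : |d0| ≤ K' * h) :
    c0 * (h / (K' + 1)) - ((B * Q + 5 * C * P) * h ^ 2) ≤
        c * (huber ((K' + 1) * h) dp - huber ((K' + 1) * h) d0)
        + c' * (huber ((K' + 1) * h) dm - huber ((K' + 1) * h) d0) := by
  have hm : 0 < (K' + 1) * h := by positivity
  have z : dp + dm - 2 * d0 = 0 := by rw [hdp, hdm]; ring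
  have hPh : h ≤ P * h := by nlinarith
  obtain ⟨R, R', h1, h2, h3, h4, h5, h6⟩ := pair_core (dp := dp) (dm := dm) (P := P) (Q := Q) hm hC hB hcc hh
    (by rw [hdp, add_sub_cancel_left, abs_of_pos hh]; exact hPh)
    (by rw [hdm, sub_sub_cancel_left, abs_neg, abs_of_pos hh]; exact hPh)
    (by rw [z, abs_zero]; positivity)
  have ab := abs_le.1 hd0
  have e : huber ((K' + 1) * h) dp + huber ((K' + 1) * h) dm - 2 * huber ((K' + 1) * h) d0
      = h / (K' + 1) := by
    unfold huber
    rw [if_pos, if_pos, if_pos, hdp, hdm]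
    · field_simp; ring
    · linarith
    · rw [abs_le, hdm]; constructor <;> linarith
    · rw [abs_le, hdp]; constructor <;> linarith
  rw [z, abs_zero, e] at h5
  have h7 := mul_le_mul_of_nonneg_right hc h1
  have h8 := mul_le_mul_of_nonneg_right hc' h2
  have h9 := mul_le_mul_of_nonneg_left h5 hc0.le
  have h10 : 0 ≤ C * P * h ^ 2 := by positivity
  linarith

/-- Exponential barrier. -/
lemma expBarrier {c0 B C : ℝ} (hc0 : 0 < c0) (hC : 0 ≤ C) : ∃ μ h0 : ℝ, 0 < μ ∧ 0 < h0 ∧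
    ∀ h cE cW cN cS p q m n, 0 < h → h < h0 → GoodW c0 B C h cE cW cN cS p q m n →
    ∀ x y : ℝ, -1 ≤ x → h ^ 2 ≤
      SP cE cW cN cS p q m n h (fun z => Real.exp (μ * (z.1 + 1))) (x, y) := by
  set μ := (12 * C + 2) / c0 + 1 with hμ
  have hμ1 : 1 ≤ μ := by rw [hμ]; have : 0 ≤ (12 * C + 2) / c0 := by positivity
                         linarith
  have hμc : 12 * C + 2 ≤ c0 * μ := by
    rw [hμ, mul_add, mul_div_cancel₀ _ hc0.ne']; linarith
  refine ⟨μ, min (1 / μ) (c0 / (4 * (C + 1))), by linarith, by positivity, ?_⟩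
  intro h cE cW cN cS p q m n hh hlt g x y hx
  have ht1 : μ * h ≤ 1 := by
    have := hlt.le.trans (min_le_left _ _)
    rw [le_div_iff₀ (by linarith)] at this; linarith
  have ht2 : 4 * (C * h) ≤ c0 := by
    have := hlt.le.trans (min_le_right _ _)
    rw [le_div_iff₀ (by linarith)] at this; nlinarith
  set t := μ * h with ht
  have ht0 : 0 < t := by rw [ht]; positivity
  set w := Real.exp (μ * (x + 1)) with hw
  have hw1 : 1 ≤ w := Real.one_le_exp (mul_nonneg (by linarith) (by linarith))
  have e1 : Real.exp (μ * (x + h + 1)) = w * Real.exp t := by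
    rw [hw, ht, ← Real.exp_add]; congr 1; ring
  have e2 : Real.exp (μ * (x - h + 1)) = w * Real.exp (-t) := by
    rw [hw, ht, ← Real.exp_add]; congr 1; ring
  simp only [SP, SD, e1, e2]
  have hb : |Real.exp t - 1| ≤ 2 * |t| := Real.abs_exp_sub_one_le (by rw [abs_of_pos ht0]; exact ht1)
  rw [abs_of_pos ht0] at hb
  have hb2 : t ^ 2 ≤ Real.exp t + Real.exp (-t) - 2 := by
    have h1 : t / 2 ≤ Real.sinh (t / 2) := Real.self_le_sinh_iff.2 (by linarith)
    have h2 := Real.cosh_sq (t / 2)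
    have h3 := Real.cosh_two_mul (t / 2)
    rw [mul_div_cancel₀ t (two_ne_zero), Real.cosh_eq] at h3
    nlinarith
  have hQ : c0 / 2 ≤ cW + q + m := by linarith [g.hW, g.hq, g.hm]
  have hPQ : |(cE + p + n) - (cW + q + m)| ≤ 3 * (C * h) := by
    have h1 := abs_le.1 g.dEW
    have h2 := abs_le.1 g.dpq
    have h3 := abs_le.1 g.dmn
    rw [abs_le]; constructor <;> linarith
  have k1 : c0 / 2 * t ^ 2 ≤ (cW + q + m) * (Real.exp t + Real.exp (-t) - 2) :=
    mul_le_mul hQ hb2 (by positivity) (by linarith)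
  have k2 : |((cE + p + n) - (cW + q + m)) * (Real.exp t - 1)| ≤ 3 * (C * h) * (2 * t) := by
    rw [abs_mul]; exact mul_le_mul hPQ hb (abs_nonneg _) (by positivity)
  have k3 := (abs_le.1 k2).1
  have k4 : h ^ 2 ≤ c0 / 2 * t ^ 2 - 3 * (C * h) * (2 * t) := by
    have : c0 / 2 * t ^ 2 - 3 * (C * h) * (2 * t) = h ^ 2 * (μ * (c0 * μ - 12 * C) / 2) := by
      rw [ht]; ring
    rw [this]
    have : 1 ≤ μ * (c0 * μ - 12 * C) / 2 := by nlinarith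
    nlinarith [sq_nonneg h]
  have k5 : h ^ 2 ≤ (cW + q + m) * (Real.exp t + Real.exp (-t) - 2)
    + ((cE + p + n) - (cW + q + m)) * (Real.exp t - 1) := by linarith
  have k6 := mul_le_mul hw1 k5 (by positivity) (by linarith)
  refine (by linarith : h ^ 2 ≤ _).trans (k6.trans (le_of_eq ?_))
  ring

lemma mvt_slope {X X' : ℝ → ℝ} {α β : ℝ}
    (hX : ∀ t ∈ Icc α β, HasDerivWithinAt X (X' t) (Icc α β) t) {c : ℝ}
    (hc : ∀ t ∈ Icc α β, c ≤ |X' t|) : ∀ s ∈ Icc α β, ∀ t ∈ Icc α β, c * |t - s| ≤ |X t - X s| := by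
  have key : ∀ s ∈ Icc α β, ∀ t ∈ Icc α β, s < t → c * |t - s| ≤ |X t - X s| := by
    intro s hs t ht hst
    have hsub : Icc s t ⊆ Icc α β := Icc_subset_Icc hs.1 ht.2
    obtain ⟨ξ, hξ, he⟩ := exists_hasDerivAt_eq_slope X X' hst
      (fun u hu => ((hX u (hsub hu)).continuousWithinAt.mono hsub))
      (fun u hu => (hX u (hsub (Ioo_subset_Icc_self hu))).hasDerivAt
        (Icc_mem_nhds (hs.1.trans_lt hu.1) (hu.2.trans_le ht.2)))
    rw [eq_div_iff (by linarith)] at he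
    rw [← he, abs_mul]
    exact mul_le_mul_of_nonneg_right (hc ξ (hsub (Ioo_subset_Icc_self hξ))) (abs_nonneg _)
  intro s hs t ht
  rcases lt_trichotomy s t with h | h | h
  · exact key s hs t ht h
  · simp [h]
  · rw [abs_sub_comm, abs_sub_comm (X t)]; exact key t ht s hs h

lemma graph_exists {X Y X' Y' : ℝ → ℝ} {α β c L M : ℝ} (hαβ : α < β) (hc : 0 < c) (hL : 0 ≤ L)
    (hM : 0 ≤ M)
    (hX : ∀ t ∈ Icc α β, HasDerivWithinAt X (X' t) (Icc α β) t)
    (hY : ∀ t ∈ Icc α β, HasDerivWithinAt Y (Y' t) (Icc α β) t)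
    (hXL : ∀ s ∈ Icc α β, ∀ t ∈ Icc α β, |X' t - X' s| ≤ L * |t - s|)
    (hYL : ∀ s ∈ Icc α β, ∀ t ∈ Icc α β, |Y' t - Y' s| ≤ L * |t - s|)
    (hXc : ∀ t ∈ Icc α β, c ≤ |X' t|)
    (hXM : ∀ t ∈ Icc α β, |X' t| ≤ M) (hYM : ∀ t ∈ Icc α β, |Y' t| ≤ M) :
    ∃ (g p : ℝ → ℝ) (K : ℝ), 0 ≤ K ∧ (∀ s, HasDerivAt g (p s) s) ∧
      (∀ s t, |p t - p s| ≤ K * |t - s|) ∧ ∀ t ∈ Icc α β, g (X t) = Y t := by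
  have hsl := mvt_slope hX hXc
  have hinj : InjOn X (Icc α β) := by
    intro s hs t ht h
    have := hsl s hs t ht
    rw [h, sub_self, abs_zero] at this
    have h2 : |t - s| ≤ 0 := by nlinarith [abs_nonneg (t - s)]
    have := abs_nonpos_iff.1 h2
    linarith
  set q : ℝ → ℝ := fun t => Y' t / X' t with hq
  have hqL : ∀ s ∈ Icc α β, ∀ t ∈ Icc α β, |q t - q s| ≤ 2 * M * L / c ^ 2 * |t - s| := by
    intro s hs t ht
    have h1 : X' t ≠ 0 := abs_pos.1 (hc.trans_le (hXc t ht))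
    have h2 : X' s ≠ 0 := abs_pos.1 (hc.trans_le (hXc s hs))
    have e : q t - q s = (Y' t * (X' s - X' t) + X' t * (Y' t - Y' s)) / (X' t * X' s) := by
      simp only [hq]; field_simp; ring
    rw [e, abs_div, abs_mul (X' t) (X' s)]
    have h3 : |Y' t * (X' s - X' t) + X' t * (Y' t - Y' s)| ≤ 2 * M * L * |t - s| := by
      refine (abs_add_le _ _).trans ?_
      rw [abs_mul, abs_mul]
      have k1 := mul_le_mul (hYM t ht) (hXL t ht s hs) (abs_nonneg _) hM
      have k2 := mul_le_mul (hXM t ht) (hYL s hs t ht) (abs_nonneg _) hM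
      rw [abs_sub_comm s t] at k1
      linarith
    have h4 : c ^ 2 ≤ |X' t| * |X' s| := by
      rw [sq]; exact mul_le_mul (hXc t ht) (hXc s hs) hc.le (abs_nonneg _)
    calc _ ≤ (2 * M * L * |t - s|) / c ^ 2 := div_le_div₀ (by positivity) h3 (by positivity) h4
      _ = _ := by ring
  set τ := Function.invFunOn X (Icc α β) with hτ
  set K : ℝ := 2 * M * L / c ^ 2 / c with hK
  have hK0 : 0 ≤ K := by positivity
  have hlip : LipschitzOnWith ⟨K, hK0⟩ (fun x => q (τ x)) (X '' Icc α β) := by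
    apply LipschitzOnWith.of_dist_le_mul
    rintro _ ⟨t, ht, rfl⟩ _ ⟨s, hs, rfl⟩
    have e1 : τ (X t) = t := hinj.leftInvOn_invFunOn ht
    have e2 : τ (X s) = s := hinj.leftInvOn_invFunOn hs
    simp only [e1, e2, Real.dist_eq]
    refine (hqL s hs t ht).trans ?_
    show _ ≤ K * _
    have := hsl s hs t ht
    rw [hK, div_mul_eq_mul_div (2 * M * L / c ^ 2) c, le_div_iff₀ hc]
    calc _ = 2 * M * L / c ^ 2 * (c * |t - s|) := by ring
      _ ≤ _ := mul_le_mul_of_nonneg_left this (by positivity)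
  obtain ⟨p, hp, hpe⟩ := hlip.extend_real
  have hpX : ∀ t ∈ Icc α β, p (X t) * X' t = Y' t := by
    intro t ht
    have h1 : X' t ≠ 0 := abs_pos.1 (hc.trans_le (hXc t ht))
    rw [← hpe (mem_image_of_mem X ht)]
    have e1 : τ (X t) = t := hinj.leftInvOn_invFunOn ht
    simp only [e1, hq]; field_simp
  set g : ℝ → ℝ := fun s => Y α + ∫ u in (X α)..s, p u with hg
  have hgd : ∀ s, HasDerivAt g (p s) s := fun s =>
    (intervalIntegral.integral_hasDerivAt_right (hp.continuous.intervalIntegrable _ _)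
      (hp.continuous.stronglyMeasurableAtFilter _ _) hp.continuous.continuousAt).const_add _
  refine ⟨g, p, K, hK0, hgd, fun s t => ?_, ?_⟩
  · have := hp.dist_le_mul t s
    rwa [Real.dist_eq, Real.dist_eq] at this
  · have hF : ∀ t ∈ Icc α β, HasDerivWithinAt (fun t => g (X t) - Y t) 0 (Icc α β) t := by
      intro t ht
      have := ((hgd (X t)).comp_hasDerivWithinAt t (hX t ht)).sub (hY t ht)
      rw [hpX t ht, sub_self] at this
      exact this
    intro t ht
    have := constant_of_derivWithin_zero (fun t ht => (hF t ht).differentiableWithinAt)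
      (fun t ht => (hF t (Ico_subset_Icc_self ht)).derivWithin
        (uniqueDiffOn_Icc hαβ t (Ico_subset_Icc_self ht))) t ht
    have h0 : g (X α) = Y α := by simp [hg]
    simp only [h0] at this
    linarith

/-- Defining functions of graph arcs. -/
structure ArcFn (P Q : ℝ) (d : ℝ × ℝ → ℝ) : Prop where
  lip : ∀ z ∈ Q2, ∀ w ∈ Q2, ∀ h : ℝ, |w.1 - z.1| ≤ h → |w.2 - z.2| ≤ h → |d w - d z| ≤ P * h
  sec : ∀ x y s t h : ℝ, |s| ≤ h → |t| ≤ h →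
    |d (x + s, y + t) + d (x - s, y - t) - 2 * d (x, y)| ≤ Q * h ^ 2
  dir : (∀ x y s : ℝ, d (x + s, y) = d (x, y) + s) ∨ (∀ x y s : ℝ, d (x, y + s) = d (x, y) + s)

lemma graph_props {g p : ℝ → ℝ} {K : ℝ} (hK : 0 ≤ K) (hg : ∀ s, HasDerivAt g (p s) s)
    (hp : ∀ s t, |p t - p s| ≤ K * |t - s|) :
    (∀ s ∈ Icc (-1 : ℝ) 1, ∀ t ∈ Icc (-1 : ℝ) 1, |g t - g s| ≤ (|p 0| + K) * |t - s|) ∧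
    ∀ x s h : ℝ, |s| ≤ h → |g (x + s) + g (x - s) - 2 * g x| ≤ 2 * K * h ^ 2 := by
  constructor
  · intro s hs t ht
    have := Convex.norm_image_sub_le_of_norm_hasDerivWithin_le (f := g) (f' := p) (s := Icc (-1 : ℝ) 1)
      (C := |p 0| + K) (x := s) (y := t) (fun x _ => (hg x).hasDerivWithinAt) (fun x hx => by
        have h1 := hp 0 x
        rw [sub_zero] at h1
        have h2 : |x| ≤ 1 := abs_le.2 hx
        have h3 := abs_sub_abs_le_abs_sub (p x) (p 0)
        rw [Real.norm_eq_abs]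
        nlinarith) (convex_Icc _ _) hs ht
    simpa [Real.norm_eq_abs] using this
  · have key : ∀ x s : ℝ, 0 < s → |g (x + s) + g (x - s) - 2 * g x| ≤ 2 * K * s ^ 2 := by
      intro x s hs
      have hcont : Continuous g := continuous_iff_continuousAt.2 fun u => (hg u).continuousAt
      obtain ⟨ξ, hξ, e1⟩ := exists_hasDerivAt_eq_slope g p (by linarith : x < x + s)
        hcont.continuousOn (fun u _ => hg u)
      obtain ⟨η, hη, e2⟩ := exists_hasDerivAt_eq_slope g p (by linarith : x - s < x)
        hcont.continuousOn (fun u _ => hg u)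
      rw [eq_div_iff (by linarith)] at e1 e2
      have e : g (x + s) + g (x - s) - 2 * g x = (p ξ - p η) * s := by linarith
      rw [e, abs_mul, abs_of_pos hs]
      have h1 := hp η ξ
      have h2 : |ξ - η| ≤ 2 * s := abs_le.2 ⟨by linarith [hξ.1, hη.2], by linarith [hξ.2, hη.1]⟩
      have h3 := h1.trans (mul_le_mul_of_nonneg_left h2 hK)
      nlinarith
    intro x s h hs
    have hsq : s ^ 2 ≤ h ^ 2 := by rw [← sq_abs]; exact pow_le_pow_left₀ (abs_nonneg _) hs 2
    have hfin : 2 * K * s ^ 2 ≤ 2 * K * h ^ 2 := mul_le_mul_of_nonneg_left hsq (by positivity)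
    refine le_trans ?_ hfin
    rcases lt_trichotomy s 0 with h1 | h1 | h1
    · have := key x (-s) (by linarith)
      rw [← sub_eq_add_neg, sub_neg_eq_add, neg_sq] at this
      rwa [add_comm (g (x + s))]
    · subst h1; simp; ring_nf; try simp
    · exact key x s h1

lemma arcFn_Y {g p : ℝ → ℝ} {K : ℝ} (hK : 0 ≤ K) (hg : ∀ s, HasDerivAt g (p s) s)
    (hp : ∀ s t, |p t - p s| ≤ K * |t - s|) :
    ArcFn (|p 0| + K + 1) (2 * K) (fun z => z.2 - g z.1) := by
  obtain ⟨h1, h2⟩ := graph_props hK hg hp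
  refine ⟨?_, ?_, Or.inr fun x y s => by ring⟩
  · intro z hz w hw h hh1 hh2
    have k := h1 z.1 ⟨hz.1.1, hz.2.1⟩ w.1 ⟨hw.1.1, hw.2.1⟩
    have k2 := mul_le_mul_of_nonneg_left hh1 (by positivity : 0 ≤ |p 0| + K)
    have k3 := abs_le.1 (k.trans k2)
    have k4 := abs_le.1 hh2
    rw [abs_le]; constructor <;> linarith
  · intro x y s t h hs ht
    have := h2 x s h hs
    rw [← abs_neg] at this
    convert this using 2
    ring

lemma arcFn_X {g p : ℝ → ℝ} {K : ℝ} (hK : 0 ≤ K) (hg : ∀ s, HasDerivAt g (p s) s)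
    (hp : ∀ s t, |p t - p s| ≤ K * |t - s|) :
    ArcFn (|p 0| + K + 1) (2 * K) (fun z => z.1 - g z.2) := by
  obtain ⟨h1, h2⟩ := graph_props hK hg hp
  refine ⟨?_, ?_, Or.inl fun x y s => by ring⟩
  · intro z hz w hw h hh1 hh2
    have k := h1 z.2 ⟨hz.1.2, hz.2.2⟩ w.2 ⟨hw.1.2, hw.2.2⟩
    have k2 := mul_le_mul_of_nonneg_left hh2 (by positivity : 0 ≤ |p 0| + K)
    have k3 := abs_le.1 (k.trans k2)
    have k4 := abs_le.1 hh1
    rw [abs_le]; constructor <;> linarith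
  · intro x y s t h hs ht
    have := h2 y t h ht
    rw [← abs_neg] at this
    convert this using 2
    ring

lemma ArcFn.mono {P Q P' Q' : ℝ} {d : ℝ × ℝ → ℝ} (hd : ArcFn P Q d) (hP : P ≤ P') (hQ : Q ≤ Q') :
    ArcFn P' Q' d := by
  refine ⟨fun z hz w hw h h1 h2 => (hd.lip z hz w hw h h1 h2).trans ?_,
    fun x y s t h h1 h2 => (hd.sec x y s t h h1 h2).trans ?_, hd.dir⟩
  · exact mul_le_mul_of_nonneg_right hP ((abs_nonneg _).trans h1)
  · exact mul_le_mul_of_nonneg_right hQ (sq_nonneg _)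

lemma arcs (r : ℝ → ℝ × ℝ) (hr : ContDiffOn ℝ 2 r (Icc 0 1)) (hrcl : r 0 = r 1)
    (hrreg : ∀ t ∈ Icc (0 : ℝ) 1, derivWithin r (Icc 0 1) t ≠ 0) :
    ∃ (n : ℕ) (d : ℕ → ℝ × ℝ → ℝ) (P Q : ℝ), 1 ≤ P ∧ 0 ≤ Q ∧ (∀ k < n, ArcFn P Q (d k)) ∧
      ∀ t ∈ Icc (0 : ℝ) 1, ∃ k < n, d k (r t) = 0 := by
  set R := derivWithin r (Icc 0 1) with hR
  have hu : UniqueDiffOn ℝ (Icc (0 : ℝ) 1) := uniqueDiffOn_Icc zero_lt_one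
  have hR1 : ContDiffOn ℝ 1 R (Icc 0 1) := hr.derivWithin hu (by norm_num)
  obtain ⟨L, hL⟩ := LocallyLipschitzOn.exists_lipschitzOnWith_of_compact isCompact_Icc
    (hR1.locallyLipschitzOn (convex_Icc (0 : ℝ) 1))
  obtain ⟨M, hM⟩ := isCompact_Icc.exists_bound_of_continuousOn hR1.continuousOn
  obtain ⟨t0, ht0, hmin⟩ := (isCompact_Icc : IsCompact (Icc (0 : ℝ) 1)).exists_isMinOn
    ⟨0, by simp⟩ hR1.continuousOn.norm
  set c := ‖R t0‖ / 2 with hc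
  have hc0 : 0 < c := by have := norm_pos_iff.2 (hrreg t0 ht0); rw [hc]; positivity
  have hcm : ∀ t ∈ Icc (0 : ℝ) 1, 2 * c ≤ ‖R t‖ := fun t ht => by
    have : ‖R t0‖ ≤ ‖R t‖ := hmin ht
    rw [hc]; linarith
  have hder : ∀ t ∈ Icc (0 : ℝ) 1, HasDerivWithinAt r (R t) (Icc 0 1) t := fun t ht =>
    (hr.differentiableOn (by norm_num) t ht).hasDerivWithinAt
  have hd1 : ∀ t ∈ Icc (0 : ℝ) 1, HasDerivWithinAt (fun t => (r t).1) (R t).1 (Icc 0 1) t :=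
    fun t ht => (ContinuousLinearMap.fst ℝ ℝ ℝ).hasFDerivAt.comp_hasDerivWithinAt t (hder t ht)
  have hd2 : ∀ t ∈ Icc (0 : ℝ) 1, HasDerivWithinAt (fun t => (r t).2) (R t).2 (Icc 0 1) t :=
    fun t ht => (ContinuousLinearMap.snd ℝ ℝ ℝ).hasFDerivAt.comp_hasDerivWithinAt t (hder t ht)
  have hLip : ∀ s ∈ Icc (0 : ℝ) 1, ∀ t ∈ Icc (0 : ℝ) 1,
      |(R t).1 - (R s).1| ≤ L * |t - s| ∧ |(R t).2 - (R s).2| ≤ L * |t - s| := by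
    intro s hs t ht
    have := hL.dist_le_mul t ht s hs
    rw [Prod.dist_eq, Real.dist_eq, Real.dist_eq, Real.dist_eq] at this
    exact max_le_iff.1 this
  have hMb : ∀ t ∈ Icc (0 : ℝ) 1, |(R t).1| ≤ |M| ∧ |(R t).2| ≤ |M| := fun t ht => by
    have := (hM t ht).trans (le_abs_self M)
    rw [Prod.norm_def] at this
    exact max_le_iff.1 this
  obtain ⟨n, hn⟩ := exists_nat_gt ((L : ℝ) / c)
  have hLc : 0 ≤ (L : ℝ) / c := div_nonneg L.2 hc0.le
  have hn0 : (0 : ℝ) < n := hLc.trans_lt hn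
  rw [div_lt_iff₀ hc0] at hn
  have harc : ∀ k : ℕ, k < n → ∃ (d : ℝ × ℝ → ℝ) (P Q : ℝ), 1 ≤ P ∧ 0 ≤ Q ∧ ArcFn P Q d ∧
      ∀ t ∈ Icc ((k : ℝ) / n) ((k + 1 : ℝ) / n), d (r t) = 0 := by
    intro k hk
    have hk1 : (k : ℝ) + 1 ≤ n := by exact_mod_cast hk
    have hαβ : (k : ℝ) / n < (k + 1 : ℝ) / n := by gcongr; linarith
    have hsub : Icc ((k : ℝ) / n) ((k + 1 : ℝ) / n) ⊆ Icc 0 1 := by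
      apply Icc_subset_Icc
      · positivity
      · rw [div_le_one hn0]; exact hk1
    have hα : (k : ℝ) / n ∈ Icc ((k : ℝ) / n) ((k + 1 : ℝ) / n) := ⟨le_rfl, hαβ.le⟩
    have hsmall : ∀ t ∈ Icc ((k : ℝ) / n) ((k + 1 : ℝ) / n), L * |t - (k : ℝ) / n| ≤ c := by
      intro t ht
      have h1 : |t - (k : ℝ) / n| ≤ 1 / n := by
        rw [abs_of_nonneg (by linarith [ht.1])]
        have := ht.2
        rw [add_div] at this; linarith
      calc L * |t - (k : ℝ) / n| ≤ L * (1 / n) := mul_le_mul_of_nonneg_left h1 L.2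
        _ ≤ c := by rw [mul_one_div, div_le_iff₀ hn0]; linarith
    have hbig := hcm _ (hsub hα)
    rw [Prod.norm_def, le_max_iff, Real.norm_eq_abs, Real.norm_eq_abs] at hbig
    rcases hbig with hb | hb
    · obtain ⟨g, p, K, hK, h1, h2, h3⟩ := graph_exists hαβ hc0 L.2 (abs_nonneg M)
        (fun t ht => (hd1 t (hsub ht)).mono hsub) (fun t ht => (hd2 t (hsub ht)).mono hsub)
        (fun s hs t ht => (hLip s (hsub hs) t (hsub ht)).1)
        (fun s hs t ht => (hLip s (hsub hs) t (hsub ht)).2)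
        (fun t ht => by
          have h1 := (hLip _ (hsub ht) _ (hsub hα)).1
          rw [abs_sub_comm ((k : ℝ) / n)] at h1
          have h2 := abs_sub_abs_le_abs_sub (R ((k : ℝ) / n)).1 (R t).1
          have h3 := hsmall t ht
          show c ≤ |(R t).1|
          linarith)
        (fun t ht => (hMb t (hsub ht)).1) (fun t ht => (hMb t (hsub ht)).2)
      refine ⟨_, _, _, ?_, ?_, arcFn_Y hK h1 h2, fun t ht => ?_⟩
      · linarith [abs_nonneg (p 0)]
      · positivity
      · simp only [h3 t ht, sub_self]
    · obtain ⟨g, p, K, hK, h1, h2, h3⟩ := graph_exists hαβ hc0 L.2 (abs_nonneg M)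
        (fun t ht => (hd2 t (hsub ht)).mono hsub) (fun t ht => (hd1 t (hsub ht)).mono hsub)
        (fun s hs t ht => (hLip s (hsub hs) t (hsub ht)).2)
        (fun s hs t ht => (hLip s (hsub hs) t (hsub ht)).1)
        (fun t ht => by
          have h1 := (hLip _ (hsub ht) _ (hsub hα)).2
          rw [abs_sub_comm ((k : ℝ) / n)] at h1
          have h2 := abs_sub_abs_le_abs_sub (R ((k : ℝ) / n)).2 (R t).2
          have h3 := hsmall t ht
          show c ≤ |(R t).2|
          linarith)
        (fun t ht => (hMb t (hsub ht)).2) (fun t ht => (hMb t (hsub ht)).1)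
      refine ⟨_, _, _, ?_, ?_, arcFn_X hK h1 h2, fun t ht => ?_⟩
      · linarith [abs_nonneg (p 0)]
      · positivity
      · simp only [h3 t ht, sub_self]
  have harc' : ∀ k : ℕ, ∃ (d : ℝ × ℝ → ℝ) (P Q : ℝ), k < n → (1 ≤ P ∧ 0 ≤ Q ∧ ArcFn P Q d ∧
      ∀ t ∈ Icc ((k : ℝ) / n) ((k + 1 : ℝ) / n), d (r t) = 0) := by
    intro k
    by_cases hk : k < n
    · obtain ⟨d, P, Q, h⟩ := harc k hk
      exact ⟨d, P, Q, fun _ => h⟩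
    · exact ⟨fun _ => 0, 0, 0, fun h => absurd h hk⟩
  choose d P Q hdPQ using harc'
  have hPn : ∀ k ∈ Finset.range n, 0 ≤ P k := fun k hk =>
    zero_le_one.trans (hdPQ k (Finset.mem_range.1 hk)).1
  have hQn : ∀ k ∈ Finset.range n, 0 ≤ Q k := fun k hk => (hdPQ k (Finset.mem_range.1 hk)).2.1
  refine ⟨n, d, 1 + ∑ k ∈ Finset.range n, P k, ∑ k ∈ Finset.range n, Q k,
    by linarith [Finset.sum_nonneg hPn], Finset.sum_nonneg hQn, fun k hk => ?_, ?_⟩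
  · refine (hdPQ k hk).2.2.1.mono ?_ (Finset.single_le_sum hQn (Finset.mem_range.2 hk))
    linarith [Finset.single_le_sum hPn (Finset.mem_range.2 hk)]
  · have main : ∀ t : ℝ, 0 ≤ t → t < 1 → ∃ k < n, d k (r t) = 0 := by
      intro t ht ht1
      have hfl : ⌊t * n⌋₊ < n := by
        rw [Nat.floor_lt (by positivity)]; nlinarith
      refine ⟨⌊t * n⌋₊, hfl, (hdPQ _ hfl).2.2.2 t ⟨?_, ?_⟩⟩
      · rw [div_le_iff₀ hn0]; exact Nat.floor_le (by positivity)
      · rw [le_div_iff₀ hn0]; exact (Nat.lt_floor_add_one _).le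
    intro t ht
    rcases ht.2.lt_or_eq with h | h
    · exact main t ht.1 h
    · rw [h, ← hrcl]; exact main 0 le_rfl zero_lt_one

set_option maxHeartbeats 1000000 in
lemma arcBarrier {c0 B C P Q K' h cE cW cN cS p q m n : ℝ} (hc0 : 0 < c0) (hC : 0 ≤ C)
    (hP : 1 ≤ P) (hQ : 0 ≤ Q) (hK' : 0 < K') (hh : 0 < h)
    (g : GoodW c0 B C h cE cW cN cS p q m n) {d : ℝ × ℝ → ℝ} (hd : ArcFn P Q d) {x y : ℝ}
    (hx1 : -1 ≤ x - h) (hx2 : x + h ≤ 1) (hy1 : -1 ≤ y - h) (hy2 : y + h ≤ 1) :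
    -(4 * (B * Q + 5 * C * P) * h ^ 2) ≤
      SP cE cW cN cS p q m n h (fun z => huber ((K' + 1) * h) (d z)) (x, y) ∧
    (|d (x, y)| ≤ K' * h → c0 * (h / (K' + 1)) - 4 * (B * Q + 5 * C * P) * h ^ 2 ≤
      SP cE cW cN cS p q m n h (fun z => huber ((K' + 1) * h) (d z)) (x, y)) := by
  have hm : 0 < (K' + 1) * h := by positivity
  have hCh : 0 ≤ C * h := by positivity
  have hQ0 : (x, y) ∈ Q2 := mem_Q2.2 ⟨⟨by linarith, by linarith⟩, by linarith, by linarith⟩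
  have l : ∀ x' y' : ℝ, |x' - x| ≤ h → |y' - y| ≤ h → |d (x', y') - d (x, y)| ≤ P * h := by
    intro x' y' h1 h2
    refine hd.lip _ hQ0 _ ?_ h h1 h2
    rw [abs_le] at h1 h2
    exact mem_Q2.2 ⟨⟨by linarith, by linarith⟩, by linarith, by linarith⟩
  have z0 : |(0 : ℝ)| ≤ h := by simpa using hh.le
  have zh : |h| ≤ h := (abs_of_pos hh).le
  have zm : |-h| ≤ h := by rw [abs_neg]; exact zh
  have ap : |x + h - x| ≤ h := by simpa using zh
  have am : |x - h - x| ≤ h := by simpa using zm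
  have a0 : |x - x| ≤ h := by simpa using hh.le
  have bp : |y + h - y| ≤ h := by simpa using zh
  have bm : |y - h - y| ≤ h := by simpa using zm
  have b0 : |y - y| ≤ h := by simpa using hh.le
  have s1 := hd.sec x y h 0 h zh z0
  have s2 := hd.sec x y 0 h h z0 zh
  have s3 := hd.sec x y h h h zh zh
  have s4 := hd.sec x y (-h) h h zm zh
  simp only [add_zero, sub_zero, sub_neg_eq_add, ← sub_eq_add_neg] at s1 s2 s3 s4
  have p1 := pairA hm hC g.bE g.dEW hh (by linarith [g.hE]) (by linarith [g.hW])
    (l _ _ ap b0) (l _ _ am b0) s1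
  have p2 := pairA hm hC g.bN g.dNS hh (by linarith [g.hN]) (by linarith [g.hS])
    (l _ _ a0 bp) (l _ _ a0 bm) s2
  have p3 := pairA hm hC g.bp g.dpq hh g.hp g.hq (l _ _ ap bp) (l _ _ am bm) s3
  have p4 := pairA hm hC g.bm g.dmn hh g.hm g.hn (l _ _ am bp) (l _ _ ap bm) s4
  constructor
  · simp only [SP, SD]; linarith
  · intro hd0
    rcases hd.dir with hdir | hdir
    · have q1 := pairB (dm := d (x - h, y)) hK' hC hc0 g.bE g.dEW hh g.hE g.hW (hdir x y h)
        (by have := hdir x y (-h); rwa [← sub_eq_add_neg, ← sub_eq_add_neg] at this) hP hQ hd0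
      simp only [SP, SD]; linarith
    · have q1 := pairB (dm := d (x, y - h)) hK' hC hc0 g.bN g.dNS hh g.hN g.hS (hdir x y h)
        (by have := hdir x y (-h); rwa [← sub_eq_add_neg, ← sub_eq_add_neg] at this) hP hQ hd0
      simp only [SP, SD]; linarith

lemma SP_lin (cE cW cN cS p q m n h A M Λ : ℝ) (w : ℝ × ℝ → ℝ) (k : ℕ) (G : ℕ → ℝ × ℝ → ℝ)
    (z : ℝ × ℝ) :
    SP cE cW cN cS p q m n h
      (fun z => A * (M - Λ * w z - ∑ i ∈ Finset.range k, G i z)) z =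
    -(A * (Λ * SP cE cW cN cS p q m n h w z
      + ∑ i ∈ Finset.range k, SP cE cW cN cS p q m n h (G i) z)) := by
  simp only [SP, SD, Finset.sum_add_distrib, ← Finset.mul_sum, Finset.sum_sub_distrib]
  ring

lemma near_curve {r : ℝ → ℝ × ℝ} {z : ℝ × ℝ} {δ δ' : ℝ} (h : distToCurve r z ≤ δ) (hδ : δ < δ') :
    ∃ t ∈ Icc (0 : ℝ) 1, |z.1 - (r t).1| ≤ δ' ∧ |z.2 - (r t).2| ≤ δ' := by
  obtain ⟨_, ⟨t, ht, rfl⟩, hlt⟩ := exists_lt_of_csInf_lt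
    (Set.Nonempty.image _ ⟨0, by simp⟩) (h.trans_lt hδ)
  refine ⟨t, ht, ?_, ?_⟩
  · refine le_trans ?_ hlt.le
    apply Real.abs_le_sqrt; nlinarith [sq_nonneg (z.2 - (r t).2)]
  · refine le_trans ?_ hlt.le
    apply Real.abs_le_sqrt; nlinarith [sq_nonneg (z.1 - (r t).1)]

set_option maxHeartbeats 4000000 in
/-- Convergence theorem for the corrected scheme: a grid function vanishing at boundary
nodes whose `L_h`-image is `O(h)` at interior nodes within distance `K h` of the interface
curve `γ` and `O(h²)` at all other interior nodes is itself uniformly `O(h²)`. -/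
theorem stmt2 (a11 a22 a12 a : ℝ × ℝ → ℝ)
    (ha11 : C21On a11 Q2) (ha22 : C21On a22 Q2) (ha12 : C21On a12 Q2)
    (hpd : ∀ z ∈ Q2, (!![a11 z, a12 z; a12 z, a22 z] : Matrix (Fin 2) (Fin 2) ℝ).PosDef)
    (hdom : ∀ z ∈ Q2, |a12 z| < min (a11 z) (a22 z))
    (ha : ContinuousOn a Q2) (ha0 : ∀ z ∈ Q2, 0 ≤ a z)
    (r : ℝ → ℝ × ℝ) (hr : ContDiffOn ℝ 2 r (Icc 0 1))
    (hrim : ∀ t ∈ Icc (0 : ℝ) 1, r t ∈ Ioo (-1 : ℝ) 1 ×ˢ Ioo (-1 : ℝ) 1)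
    (hrcl : r 0 = r 1) (hrinj : InjOn r (Ico 0 1))
    (hrreg : ∀ t ∈ Icc (0 : ℝ) 1, derivWithin r (Icc 0 1) t ≠ 0)
    (K : ℝ) (hK : 0 < K) :
    ∃ C > (0 : ℝ), ∃ h₀ > (0 : ℝ), ∀ N : ℕ, Even N → 2 / (N : ℝ) < h₀ →
      ∀ Cb : ℝ, 0 < Cb → ∀ e : ℝ × ℝ → ℝ,
        (∀ i j : ℕ, i ≤ N → j ≤ N → (i = 0 ∨ i = N ∨ j = 0 ∨ j = N) →
          e (nodePt N i j) = 0) →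
        (∀ i j : ℕ, 1 ≤ i → i ≤ N - 1 → 1 ≤ j → j ≤ N - 1 →
          distToCurve r (nodePt N i j) ≤ K * (2 / (N : ℝ)) →
          |Lh a11 a22 a12 a (2 / (N : ℝ)) e (nodePt N i j)| ≤ Cb * (2 / (N : ℝ))) →
        (∀ i j : ℕ, 1 ≤ i → i ≤ N - 1 → 1 ≤ j → j ≤ N - 1 →
          ¬(distToCurve r (nodePt N i j) ≤ K * (2 / (N : ℝ))) →
          |Lh a11 a22 a12 a (2 / (N : ℝ)) e (nodePt N i j)| ≤ Cb * (2 / (N : ℝ)) ^ 2) →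
        ∀ i j : ℕ, i ≤ N → j ≤ N →
          |e (nodePt N i j)| ≤ C * Cb * (2 / (N : ℝ)) ^ 2 := by
  obtain ⟨c0, B, C, h1, hc0, hB, hC, hh1, hw⟩ := weights a11 a22 a12 a ha11 ha22 ha12 hdom
  obtain ⟨μ, h2, hμ, hh2, hexp⟩ := expBarrier (B := B) hc0 hC
  obtain ⟨n, d, P, Q, hP, hQ, harc, hcov⟩ := arcs r hr hrcl hrreg
  obtain ⟨am, ham, hamax⟩ := bdd_of_cont ha
  have hdb : ∃ Dm : ℝ, 0 ≤ Dm ∧ ∀ k < n, ∀ z ∈ Q2, |d k z| ≤ Dm := by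
    refine ⟨∑ k ∈ Finset.range n, (|d k (0, 0)| + P), Finset.sum_nonneg fun k _ => by positivity, ?_⟩
    intro k hk z hz
    have k1 := (harc k hk).lip (0, 0) (mem_Q2.2 (by norm_num)) z hz 1
      (by rw [abs_le]; exact ⟨by linarith [hz.1.1], by linarith [hz.2.1]⟩)
      (by rw [abs_le]; exact ⟨by linarith [hz.1.2], by linarith [hz.2.2]⟩)
    have k2 := abs_sub_abs_le_abs_sub (d k z) (d k (0, 0))
    have k3 := Finset.single_le_sum (f := fun k => |d k (0, 0)| + P) (s := Finset.range n)
      (fun k _ => by positivity) (Finset.mem_range.2 hk)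
    linarith
  obtain ⟨Dm, hDm, hdm⟩ := hdb
  set K' := P * (K + 1) with hK'
  have hK'0 : 0 < K' := by positivity
  set F := 4 * (B * Q + 5 * C * P) with hF
  have hF0 : 0 ≤ F := by positivity
  set Λ := n * F + 1 with hΛ
  have hΛ0 : 0 < Λ := by positivity
  set Z := Λ * Real.exp (2 * μ) + n * Dm with hZ
  have hZ0 : 0 ≤ Z := by positivity
  set D0 := 8 * B + am with hD0
  have hD00 : 0 ≤ D0 := by positivity
  set α := min (1 / 16) (c0 / (2 * (D0 + 1))) with hα
  have hα0 : 0 < α := by positivity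
  have hαD : α * D0 ≤ c0 / 2 := by
    have e : α ≤ c0 / (2 * (D0 + 1)) := min_le_right _ _
    rw [le_div_iff₀ (by positivity)] at e
    nlinarith
  set ρ := 1 + (K' + 1) / c0 with hρ
  have hρ0 : 0 < ρ := by positivity
  refine ⟨4 * ρ * (Z + 1), by positivity,
    min (min h1 h2) (min 1 (min (α * c0 / (C + 1)) (c0 / (4 * (C + 1))))), by positivity, ?_⟩
  intro N _ hN Cb hCb e hbd hnear hfar i j hi hj
  rcases Nat.eq_zero_or_pos N with hN0 | hN0
  · rw [hbd i j hi hj (by omega), abs_zero]; positivity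
  have hNr : (0 : ℝ) < N := by exact_mod_cast hN0
  set h := 2 / (N : ℝ) with hh
  have hh0 : 0 < h := by positivity
  have hNh : (N : ℝ) * h = 2 := by rw [hh]; field_simp
  simp only [lt_min_iff] at hN
  obtain ⟨⟨hl1, hl2⟩, hl3, hl4, hl5⟩ := hN
  rw [lt_div_iff₀ (by positivity)] at hl4 hl5
  -- lattice functions
  set pt : ℤ → ℤ → ℝ × ℝ := fun i j => (-1 + i * h, -1 + j * h) with hpt
  have hptn : ∀ i j : ℕ, pt i j = nodePt N i j := fun i j => by simp [hpt, nodePt, hh]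
  have hptQ : ∀ i j : ℤ, 0 ≤ i → i ≤ N → 0 ≤ j → j ≤ N → pt i j ∈ Q2 := by
    intro i j h1 h2 h3 h4
    have h1' : (0 : ℝ) ≤ i := by exact_mod_cast h1
    have h2' : (i : ℝ) ≤ N := by exact_mod_cast h2
    have h3' : (0 : ℝ) ≤ j := by exact_mod_cast h3
    have h4' : (j : ℝ) ≤ N := by exact_mod_cast h4
    have g1 := mul_nonneg h1' hh0.le
    have g2 := mul_le_mul_of_nonneg_right h2' hh0.le
    have g3 := mul_nonneg h3' hh0.le
    have g4 := mul_le_mul_of_nonneg_right h4' hh0.le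
    refine mem_Q2.2 ⟨⟨?_, ?_⟩, ?_, ?_⟩ <;> linarith
  set κ := 2 * Cb * ρ with hκ
  have hκ0 : 0 < κ := by positivity
  set φ : ℝ × ℝ → ℝ := fun z => h ^ 2 * κ * (2 * Z + 1 - Λ * Real.exp (μ * (z.1 + 1))
    - ∑ k ∈ Finset.range n, huber ((K' + 1) * h) (d k z)) with hφ
  set m0 := h ^ 2 * κ * (Z + 1) with hm0
  have hm00 : 0 < m0 := by positivity
  have hmm : 0 < (K' + 1) * h := by positivity
  have hφb : ∀ z ∈ Q2, m0 ≤ φ z ∧ φ z ≤ 2 * m0 := by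
    intro z hz
    have e1 : Real.exp (μ * (z.1 + 1)) ≤ Real.exp (2 * μ) := by
      apply Real.exp_le_exp.2
      have : z.1 ≤ 1 := hz.2.1
      nlinarith
    have e2 := Real.exp_pos (μ * (z.1 + 1))
    have e3 : 0 ≤ ∑ k ∈ Finset.range n, huber ((K' + 1) * h) (d k z) :=
      Finset.sum_nonneg fun k _ => huber_nonneg hmm _
    have e4 : ∑ k ∈ Finset.range n, huber ((K' + 1) * h) (d k z) ≤ n * Dm := by
      have := Finset.sum_le_card_nsmul (Finset.range n)
        (fun k => huber ((K' + 1) * h) (d k z)) Dm (fun k hk =>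
          (huber_le hmm _).trans (hdm k (Finset.mem_range.1 hk) z hz))
      simpa using this
    have e5 := mul_le_mul_of_nonneg_left e1 hΛ0.le
    have e6 := mul_pos hΛ0 e2
    have hA : 0 ≤ h ^ 2 * κ := by positivity
    constructor
    · exact mul_le_mul_of_nonneg_left (by linarith) hA
    · rw [hm0, hφ]
      have := mul_le_mul_of_nonneg_left (by linarith : 2 * Z + 1 - Λ * Real.exp (μ * (z.1 + 1))
        - ∑ k ∈ Finset.range n, huber ((K' + 1) * h) (d k z) ≤ 2 * (Z + 1)) hA
      linarith
  set E : ℤ → ℤ → ℝ := fun i j => if 0 < i ∧ i < N ∧ 0 < j ∧ j < N then e (pt i j) else 0 with hE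
  set Φ : ℤ → ℤ → ℝ := fun i j => if 0 ≤ i ∧ i ≤ N ∧ 0 ≤ j ∧ j ≤ N then φ (pt i j) else m0 with hΦ
  have hEv : ∀ i j : ℤ, 0 ≤ i → i ≤ N → 0 ≤ j → j ≤ N → E i j = e (pt i j) := by
    intro i j h1 h2 h3 h4
    by_cases hc : 0 < i ∧ i < N ∧ 0 < j ∧ j < N
    · simp only [hE, if_pos hc]
    · simp only [hE, if_neg hc]
      lift i to ℕ using h1
      lift j to ℕ using h3
      rw [hptn]
      exact (hbd i j (by omega) (by omega) (by omega)).symm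
  have hΦv : ∀ i j : ℤ, 0 ≤ i → i ≤ N → 0 ≤ j → j ≤ N → Φ i j = φ (pt i j) := by
    intro i j h1 h2 h3 h4
    simp only [hΦ]; rw [if_pos ⟨h1, h2, h3, h4⟩]
  have hSZ : ∀ (cE cW cN cS p q m n : ℝ) (V : ℤ → ℤ → ℝ) (v : ℝ × ℝ → ℝ),
      (∀ i j : ℤ, 0 ≤ i → i ≤ N → 0 ≤ j → j ≤ N → V i j = v (pt i j)) →
      ∀ i j : ℤ, 0 < i → i < N → 0 < j → j < N →
      SZ cE cW cN cS p q m n V i j = SP cE cW cN cS p q m n h v (pt i j) := by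
    intro cE cW cN cS p q m n V v hV i j h1 h2 h3 h4
    have s1 : (-1 : ℝ) + ((i + 1 : ℤ) : ℝ) * h = -1 + i * h + h := by push_cast; ring
    have s2 : (-1 : ℝ) + ((i - 1 : ℤ) : ℝ) * h = -1 + i * h - h := by push_cast; ring
    have s3 : (-1 : ℝ) + ((j + 1 : ℤ) : ℝ) * h = -1 + j * h + h := by push_cast; ring
    have s4 : (-1 : ℝ) + ((j - 1 : ℤ) : ℝ) * h = -1 + j * h - h := by push_cast; ring
    simp only [SZ, SP]
    rw [hV i j (by omega) (by omega) (by omega) (by omega),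
      hV (i+1) j (by omega) (by omega) (by omega) (by omega),
      hV (i-1) j (by omega) (by omega) (by omega) (by omega),
      hV i (j+1) (by omega) (by omega) (by omega) (by omega),
      hV i (j-1) (by omega) (by omega) (by omega) (by omega),
      hV (i+1) (j+1) (by omega) (by omega) (by omega) (by omega),
      hV (i-1) (j-1) (by omega) (by omega) (by omega) (by omega),
      hV (i-1) (j+1) (by omega) (by omega) (by omega) (by omega),
      hV (i+1) (j-1) (by omega) (by omega) (by omega) (by omega)]
    simp only [hpt, s1, s2, s3, s4]
  have hcomp := comparison N c0 D0 (C * h) α m0 E Φ hc0 hα0 (min_le_left _ _) hαD (by nlinarith)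
    (by nlinarith) hm00 ?_ ?_ ?_ i j
  · rw [hEv i j (by omega) (by omega) (by omega) (by omega),
      hΦv i j (by omega) (by omega) (by omega) (by omega), hptn] at hcomp
    have hb := (hφb _ (hptQ i j (by omega) (by omega) (by omega) (by omega))).2
    rw [hptn] at hb
    refine hcomp.trans (hb.trans (le_of_eq ?_))
    rw [hm0, hκ]; ring
  · intro i j
    by_cases hc : 0 ≤ i ∧ i ≤ N ∧ 0 ≤ j ∧ j ≤ N
    · rw [hΦv i j hc.1 hc.2.1 hc.2.2.1 hc.2.2.2]
      exact hφb _ (hptQ i j hc.1 hc.2.1 hc.2.2.1 hc.2.2.2)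
    · simp only [hΦ]; rw [if_neg hc]; constructor <;> linarith
  · intro i j hc
    simp only [hE]; rw [if_neg hc]
  · intro i j hi1 hi2 hj1 hj2
    have hi1' : (1 : ℝ) ≤ i := by exact_mod_cast hi1
    have hi2' : (i : ℝ) + 1 ≤ N := by exact_mod_cast hi2
    have hj1' : (1 : ℝ) ≤ j := by exact_mod_cast hj1
    have hj2' : (j : ℝ) + 1 ≤ N := by exact_mod_cast hj2
    have gi1 := mul_le_mul_of_nonneg_right hi1' hh0.le
    have gi2 := mul_le_mul_of_nonneg_right hi2' hh0.le
    have gj1 := mul_le_mul_of_nonneg_right hj1' hh0.le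
    have gj2 := mul_le_mul_of_nonneg_right hj2' hh0.le
    have bx1 : -1 ≤ -1 + (i : ℝ) * h - h := by linarith
    have bx2 : -1 + (i : ℝ) * h + h ≤ 1 := by linarith
    have by1 : -1 ≤ -1 + (j : ℝ) * h - h := by linarith
    have by2 : -1 + (j : ℝ) * h + h ≤ 1 := by linarith
    obtain ⟨cE, cW, cN, cS, p, q, m, l, g, hLh⟩ := hw h hh0 hl1 _ _ bx1 bx2 by1 by2
    have hQz : pt i j ∈ Q2 := hptQ i j (by omega) (by omega) (by omega) (by omega)
    have haz := ha0 _ hQz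
    have haz2 := (abs_le.1 (hamax _ hQz)).2
    have hsq : h ^ 2 ≤ 1 := pow_le_one₀ hh0.le hl3.le
    refine ⟨cE, cW, cN, cS, p, q, m, l, h ^ 2 * a (pt i j), g.hE, g.hW, g.hN, g.hS, g.hp, g.hq, g.hm,
      g.hn, by positivity, ?_, ?_⟩
    · have : h ^ 2 * a (pt i j) ≤ am :=
        (mul_le_of_le_one_left haz hsq).trans haz2
      linarith [(abs_le.1 g.bE).2, (abs_le.1 g.bW).2, (abs_le.1 g.bN).2, (abs_le.1 g.bS).2,
        (abs_le.1 g.bp).2, (abs_le.1 g.bq).2, (abs_le.1 g.bm).2, (abs_le.1 g.bn).2]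
    · rw [hSZ _ _ _ _ _ _ _ _ E e hEv i j hi1 hi2 hj1 hj2,
        hSZ _ _ _ _ _ _ _ _ Φ φ hΦv i j hi1 hi2 hj1 hj2,
        hEv i j (by omega) (by omega) (by omega) (by omega),
        hΦv i j (by omega) (by omega) (by omega) (by omega)]
      have hL' := hLh e
      change h ^ 2 * Lh a11 a22 a12 a h e (pt i j) = SP cE cW cN cS p q m l h e (pt i j)
        - (h ^ 2 * a (pt i j)) * e (pt i j) at hL'
      rw [← hL', abs_mul, abs_of_pos (by positivity : 0 < h ^ 2)]
      have hφpos : 0 ≤ h ^ 2 * a (pt i j) * φ (pt i j) :=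
        mul_nonneg (by positivity) (hm00.le.trans (hφb _ hQz).1)
      have hlin : SP cE cW cN cS p q m l h φ (pt i j) = -(h ^ 2 * κ *
          (Λ * SP cE cW cN cS p q m l h (fun z => Real.exp (μ * (z.1 + 1))) (pt i j)
          + ∑ k ∈ Finset.range n,
            SP cE cW cN cS p q m l h (fun z => huber ((K' + 1) * h) (d k z)) (pt i j))) :=
        SP_lin cE cW cN cS p q m l h (h ^ 2 * κ) (2 * Z + 1) Λ
          (fun z => Real.exp (μ * (z.1 + 1))) n (fun k z => huber ((K' + 1) * h) (d k z)) (pt i j)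
      have hex : h ^ 2 ≤ SP cE cW cN cS p q m l h (fun z => Real.exp (μ * (z.1 + 1))) (pt i j) :=
        hexp h cE cW cN cS p q m l hh0 hl2 g _ _ (by linarith)
      have hab : ∀ k < n, _ := fun k hk =>
        arcBarrier hc0 hC hP hQ hK'0 hh0 g (harc k hk) bx1 bx2 by1 by2
      set S : ℕ → ℝ := fun k =>
        SP cE cW cN cS p q m l h (fun z => huber ((K' + 1) * h) (d k z)) (pt i j) with hS
      have hab1 : ∀ k < n, 0 ≤ S k + F * h ^ 2 := fun k hk => by
        have := (hab k hk).1
        simp only [hS, hF]; linarith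
      have hsum : ∑ k ∈ Finset.range n, (S k + F * h ^ 2)
          = ∑ k ∈ Finset.range n, S k + n * (F * h ^ 2) := by
        rw [Finset.sum_add_distrib]; simp
      have hsum0 : 0 ≤ ∑ k ∈ Finset.range n, (S k + F * h ^ 2) :=
        Finset.sum_nonneg fun k hk => hab1 k (Finset.mem_range.1 hk)
      have hΛe := mul_le_mul_of_nonneg_left hex hΛ0.le
      have hΛh : Λ * h ^ 2 = n * (F * h ^ 2) + h ^ 2 := by rw [hΛ]; ring
      -- it suffices to bound the operator by the barrier
      suffices hsuf : |Lh a11 a22 a12 a h e (pt i j)| <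
          κ * (h ^ 2 + ∑ k ∈ Finset.range n, (S k + F * h ^ 2)) by
        have t1 : κ * (h ^ 2 + ∑ k ∈ Finset.range n, (S k + F * h ^ 2)) ≤
            κ * (Λ * SP cE cW cN cS p q m l h (fun z => Real.exp (μ * (z.1 + 1))) (pt i j)
            + ∑ k ∈ Finset.range n, S k) :=
          mul_le_mul_of_nonneg_left (by linarith) hκ0.le
        have t2 := mul_lt_mul_of_pos_left (hsuf.trans_le t1) (by positivity : 0 < h ^ 2)
        rw [hlin]
        linarith
      have hiN : ∃ i' j' : ℕ, i = i' ∧ j = j' :=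
        ⟨i.toNat, j.toNat, by omega, by omega⟩
      obtain ⟨i', j', rfl, rfl⟩ := hiN
      have hρ1 : 1 ≤ ρ := by rw [hρ]; have : 0 ≤ (K' + 1) / c0 := by positivity
                             linarith
      by_cases hnr : distToCurve r (pt i' j') ≤ K * h
      · have hb := hnear i' j' (by omega) (by omega) (by omega) (by omega) (by rw [← hptn]; exact hnr)
        rw [← hptn] at hb
        obtain ⟨t, ht, ht1, ht2⟩ := near_curve hnr (by linarith : K * h < (K + 1) * h)
        obtain ⟨k, hk, hk0⟩ := hcov t ht
        have hrt := hrim t ht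
        have hrQ : r t ∈ Q2 := ⟨⟨hrt.1.1.le, hrt.2.1.le⟩, hrt.1.2.le, hrt.2.2.le⟩
        have hdz := (harc k hk).lip (r t) hrQ _ hQz ((K + 1) * h) ht1 ht2
        rw [hk0, sub_zero, ← mul_assoc, ← hK'] at hdz
        have hk2 := (hab k hk).2 hdz
        have hk3 : c0 * (h / (K' + 1)) ≤ S k + F * h ^ 2 := by
          simp only [hS, hF]; linarith
        have hk4 := Finset.single_le_sum (f := fun k => S k + F * h ^ 2) (s := Finset.range n)
          (fun k hk => hab1 k (Finset.mem_range.1 hk)) (Finset.mem_range.2 hk)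
        have hk5 : κ * (c0 * (h / (K' + 1))) ≤
            κ * (h ^ 2 + ∑ k ∈ Finset.range n, (S k + F * h ^ 2)) :=
          mul_le_mul_of_nonneg_left (hk3.trans (hk4.trans (le_add_of_nonneg_left (sq_nonneg h)))) hκ0.le
        refine lt_of_le_of_lt hb (lt_of_lt_of_le ?_ hk5)
        have hk6 : (K' + 1) / c0 * (c0 * (h / (K' + 1))) = h := by field_simp
        have hk7 : 0 < c0 * (h / (K' + 1)) := by positivity
        have hk8 : κ * (c0 * (h / (K' + 1))) = 2 * Cb * (c0 * (h / (K' + 1)) + h) := by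
          rw [hκ, hρ]
          linear_combination (2 * Cb) * hk6
        rw [hk8]
        linarith [mul_pos hCb hh0, mul_pos hCb hk7]
      · have hb := hfar i' j' (by omega) (by omega) (by omega) (by omega) (by rw [← hptn]; exact hnr)
        rw [← hptn] at hb
        have hk5 : κ * h ^ 2 ≤ κ * (h ^ 2 + ∑ k ∈ Finset.range n, (S k + F * h ^ 2)) :=
          mul_le_mul_of_nonneg_left (by linarith) hκ0.le
        refine lt_of_le_of_lt hb (lt_of_lt_of_le ?_ hk5)
        have : 0 < Cb * h ^ 2 := by positivity
        have hk9 := mul_le_mul_of_nonneg_right hρ1 this.le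
        rw [hκ]
        linarith
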